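/- Let f : D → ℝ^k have ℓ₂-sensitivity Δ₂f. The Gaussian mechanism M(D) = f(D) + (Z₁, …, Z_k) with Z_i i.i.d. N(0, σ²) and σ > √(2 ln(1.25/δ)) · Δ₂f / ε (for ε ∈ (0,1)) is (ε, δ)-differentially private. -/

import Mathlib

open MeasureTheory ProbabilityTheory

open scoped NNReal ENNReal

section Tail

theorem gaussianReal_Ioi_add (m t : ℝ) :
    gaussianReal m 1 (Set.Ioi (m + t)) = gaussianReal (-t) 1 (Set.Ioi 0) := by
  rw [show (-t : ℝ) = m - (m + t) by ring, ← gaussianReal_map_sub_const,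
    Measure.map_apply (by fun_prop) measurableSet_Ioi]
  congr 1
  ext x
  simp

theorem gaussianReal_zero_Ioi_zero_le_half : gaussianReal 0 1 (Set.Ioi 0) ≤ 1 / 2 := by
  have h : gaussianReal 0 1 (Set.Iio 0) = gaussianReal 0 1 (Set.Ioi 0) := by
    conv_lhs => rw [← neg_zero (G := ℝ), ← gaussianReal_map_neg,
      Measure.map_apply (by fun_prop) measurableSet_Iio]
    congr 1
    ext x
    simp
  have hdisj : Disjoint (Set.Iio (0 : ℝ)) (Set.Ioi 0) :=
    Set.disjoint_left.2 fun x hx hx' => lt_asymm (Set.mem_Iio.1 hx) hx'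
  have hsum : gaussianReal 0 1 (Set.Iio 0) + gaussianReal 0 1 (Set.Ioi 0) ≤ 1 := by
    rw [← measure_union hdisj measurableSet_Ioi]
    exact prob_le_one
  rwa [h, ← mul_two, ← ENNReal.le_div_iff_mul_le (by simp) (by simp)] at hsum

/-- Gaussian tail bound with the sharp constant `1 / 2`. -/
theorem gaussianReal_Ioi_add_le_of_nonneg (m : ℝ) {t : ℝ} (ht : 0 ≤ t) :
    gaussianReal m 1 (Set.Ioi (m + t)) ≤ ENNReal.ofReal (Real.exp (-t ^ 2 / 2) / 2) := by
  rw [gaussianReal_Ioi_add, gaussianReal_apply _ one_ne_zero]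
  calc ∫⁻ x in Set.Ioi 0, gaussianPDF (-t) 1 x
      ≤ ∫⁻ x in Set.Ioi 0, ENNReal.ofReal (Real.exp (-t ^ 2 / 2)) * gaussianPDF 0 1 x := by
        refine setLIntegral_mono' measurableSet_Ioi fun x hx => ?_
        rw [gaussianPDF, gaussianPDF, ← ENNReal.ofReal_mul (Real.exp_pos _).le]
        refine ENNReal.ofReal_le_ofReal ?_
        rw [gaussianPDFReal, gaussianPDFReal, mul_left_comm, ← Real.exp_add]
        gcongr
        have : 0 ≤ x * t := mul_nonneg (le_of_lt hx) ht
        simp only [NNReal.coe_one]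
        linarith
    _ = ENNReal.ofReal (Real.exp (-t ^ 2 / 2)) * gaussianReal 0 1 (Set.Ioi 0) := by
        rw [lintegral_const_mul _ (measurable_gaussianPDF 0 1), gaussianReal_apply _ one_ne_zero]
    _ ≤ ENNReal.ofReal (Real.exp (-t ^ 2 / 2)) * (1 / 2) := by
        gcongr
        exact gaussianReal_zero_Ioi_zero_le_half
    _ = ENNReal.ofReal (Real.exp (-t ^ 2 / 2) / 2) := by
        rw [ENNReal.ofReal_div_of_pos two_pos, ENNReal.ofReal_ofNat, mul_one_div]

theorem gaussianPDF_one_le_one (m x : ℝ) : gaussianPDF m 1 x ≤ 1 := by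
  rw [gaussianPDF, ENNReal.ofReal_le_one, gaussianPDFReal]
  refine mul_le_one₀ (inv_le_one_of_one_le₀ ?_) (Real.exp_pos _).le ?_
  · rw [Real.one_le_sqrt]
    have := Real.pi_gt_three
    simp only [NNReal.coe_one]
    linarith
  · rw [Real.exp_le_one_iff]
    have := sq_nonneg (x - m)
    simp only [NNReal.coe_one]
    linarith

theorem gaussianReal_Ioi_add_le_of_nonpos (m : ℝ) {t : ℝ} (ht : t ≤ 0) :
    gaussianReal m 1 (Set.Ioi (m + t)) ≤ ENNReal.ofReal (1 / 2 - t) := by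
  have hmain : gaussianReal m 1 (Set.Ioi (m + 0)) ≤ ENNReal.ofReal (1 / 2) := by
    simpa using gaussianReal_Ioi_add_le_of_nonneg m le_rfl
  have hmid : gaussianReal m 1 (Set.Ioc (m + t) (m + 0)) ≤ ENNReal.ofReal (-t) := by
    rw [gaussianReal_apply _ one_ne_zero]
    calc ∫⁻ x in Set.Ioc (m + t) (m + 0), gaussianPDF m 1 x
        ≤ ∫⁻ _ in Set.Ioc (m + t) (m + 0), 1 :=
          lintegral_mono fun x => gaussianPDF_one_le_one m x
      _ = ENNReal.ofReal (-t) := by simp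
  rw [← Set.Ioc_union_Ioi_eq_Ioi (show m + t ≤ m + 0 by linarith),
    show 1 / 2 - t = -t + 1 / 2 by ring, ENNReal.ofReal_add (by linarith) (by norm_num)]
  exact (measure_union_le _ _).trans (add_le_add hmid hmain)

/-- The tail estimate behind the constant `1.25` of the Gaussian mechanism. -/
theorem gaussianReal_Ioi_le_of_sqrt_log_lt (m : ℝ) {c ε δ : ℝ} (hε : 0 < ε) (hε1 : ε < 1)
    (hδ : 0 < δ) (hδ1 : δ < 1) (hc : Real.sqrt (2 * Real.log (1.25 / δ)) < c) :
    gaussianReal m 1 (Set.Ioi (m + (c - ε / (2 * c)))) ≤ ENNReal.ofReal δ := by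
  have hc0 : 0 < c := (Real.sqrt_nonneg _).trans_lt hc
  have hlog : 2 * Real.log (1.25 / δ) < c ^ 2 := (Real.sqrt_lt' hc0).1 hc
  have hδexp : 1.25 * Real.exp (-c ^ 2 / 2) ≤ δ := by
    have h1 : 1.25 / δ ≤ Real.exp (c ^ 2 / 2) := by
      rw [← Real.log_le_iff_le_exp (by positivity)]
      linarith
    rw [div_le_iff₀ hδ] at h1
    have h2 : Real.exp (-c ^ 2 / 2) * Real.exp (c ^ 2 / 2) = 1 := by
      rw [← Real.exp_add]; ring_nf; exact Real.exp_zero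
    calc 1.25 * Real.exp (-c ^ 2 / 2)
        ≤ (Real.exp (c ^ 2 / 2) * δ) * Real.exp (-c ^ 2 / 2) := by gcongr
      _ = δ * (Real.exp (-c ^ 2 / 2) * Real.exp (c ^ 2 / 2)) := by ring
      _ = δ := by rw [h2, mul_one]
  rcases le_total 0 (c - ε / (2 * c)) with ht | ht
  · refine (gaussianReal_Ioi_add_le_of_nonneg m ht).trans (ENNReal.ofReal_le_ofReal ?_)
    have hexp : Real.exp (1 / 2) ≤ 2 := by
      rw [← Real.le_log_iff_exp_le two_pos]
      linarith [Real.log_two_gt_d9]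
    have hsq : (c - ε / (2 * c)) ^ 2 = c ^ 2 - ε + (ε / (2 * c)) ^ 2 := by
      field_simp; ring
    calc Real.exp (-(c - ε / (2 * c)) ^ 2 / 2) / 2
        ≤ Real.exp (-c ^ 2 / 2 + 1 / 2) / 2 := by
          gcongr
          nlinarith [sq_nonneg (ε / (2 * c))]
      _ = Real.exp (-c ^ 2 / 2) * Real.exp (1 / 2) / 2 := by rw [Real.exp_add]
      _ ≤ Real.exp (-c ^ 2 / 2) * 2 / 2 := by gcongr
      _ ≤ 1.25 * Real.exp (-c ^ 2 / 2) := by linarith [Real.exp_pos (-c ^ 2 / 2)]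
      _ ≤ δ := hδexp
  · refine (gaussianReal_Ioi_add_le_of_nonpos m ht).trans (ENNReal.ofReal_le_ofReal ?_)
    have hupper : c ^ 2 ≤ 1 / 2 := by
      rw [sub_nonpos, le_div_iff₀ (by positivity)] at ht
      nlinarith
    have hlower : 0.4 < c ^ 2 := by
      have h1 : 1 - (1.25 / δ)⁻¹ ≤ Real.log (1.25 / δ) :=
        Real.one_sub_inv_le_log_of_pos (by positivity)
      rw [inv_div] at h1
      norm_num at h1 hlog ⊢
      linarith
    have hc6 : 0.6 < c := by nlinarith
    have hdiv : ε / (2 * c) - c ≤ 0.2 := by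
      rw [sub_le_iff_le_add, div_le_iff₀ (by positivity)]
      nlinarith
    linarith [Real.add_one_le_exp (-c ^ 2 / 2)]

end Tail

section Product

variable {ι : Type*} [Fintype ι]

theorem map_sum_const_mul_pi_gaussianReal (a m : ι → ℝ) (v : ι → ℝ≥0) :
    (Measure.pi fun i => gaussianReal (m i) (v i)).map (fun x => ∑ i, a i * x i) =
      gaussianReal (∑ i, a i * m i) (∑ i, NNReal.mk (a i ^ 2) (sq_nonneg _) * v i) := by
  refine Measure.ext_of_charFun ?_
  have hmeas (i : ι) : AEMeasurable (fun x : ι → ℝ => a i * x i)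
      (Measure.pi fun i => gaussianReal (m i) (v i)) :=
    Measurable.aemeasurable (by fun_prop)
  rw [iIndepFun.charFun_map_fun_sum_eq_prod hmeas
    (iIndepFun_pi (X := fun i (y : ℝ) => a i * y) fun i => by fun_prop)]
  ext t
  have hmap (i : ι) : (Measure.pi fun i => gaussianReal (m i) (v i)).map (fun x => a i * x i) =
      gaussianReal (a i * m i) (NNReal.mk (a i ^ 2) (sq_nonneg _) * v i) := by
    rw [← gaussianReal_map_const_mul,
      ← (measurePreserving_eval (fun i => gaussianReal (m i) (v i)) i).map_eq,
      Measure.map_map (by fun_prop) (by fun_prop)]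
    rfl
  simp only [Finset.prod_apply, hmap, charFun_gaussianReal, ← Complex.exp_sum]
  congr 1
  push_cast
  simp only [Finset.sum_sub_distrib, Finset.mul_sum, Finset.sum_mul, Finset.sum_div]

theorem pi_withDensity {α : ι → Type*} [∀ i, MeasurableSpace (α i)] (μ : ∀ i, Measure (α i))
    [∀ i, IsProbabilityMeasure (μ i)] {r : ∀ i, α i → ℝ≥0∞} (hr : ∀ i, Measurable (r i))
    [∀ i, SigmaFinite ((μ i).withDensity (r i))] :
    (Measure.pi fun i => (μ i).withDensity (r i)) =
      (Measure.pi μ).withDensity fun x => ∏ i, r i (x i) := by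
  refine Measure.pi_eq fun s hs => ?_
  have hind (i : ι) : Measurable ((s i).indicator (r i)) := (hr i).indicator (hs i)
  have hbox : (Set.univ.pi s).indicator (fun x => ∏ i, r i (x i)) =
      fun x => ∏ i, (s i).indicator (r i) (x i) := by
    classical
    ext x
    by_cases hx : x ∈ Set.univ.pi s
    · rw [Set.indicator_of_mem hx]
      exact Finset.prod_congr rfl fun i _ => (Set.indicator_of_mem (hx i trivial) _).symm
    · rw [Set.indicator_of_notMem hx]
      simp only [Set.mem_univ_pi, not_forall] at hx
      obtain ⟨i, hi⟩ := hx
      exact (Finset.prod_eq_zero (Finset.mem_univ i) (Set.indicator_of_notMem hi _)).symm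
  rw [withDensity_apply _ (MeasurableSet.univ_pi hs),
    ← lintegral_indicator (MeasurableSet.univ_pi hs), hbox,
    lintegral_prod_eq_prod_lintegral_of_indepFun Finset.univ
      (fun i (x : ∀ i, α i) => (s i).indicator (r i) (x i))
      (iIndepFun_pi fun i => (hind i).aemeasurable)
      (fun i => (hind i).comp (measurable_pi_apply i))]
  refine Finset.prod_congr rfl fun i _ => ?_
  rw [withDensity_apply _ (hs i), ← lintegral_indicator (hs i),
    ← (measurePreserving_eval μ i).lintegral_comp (hind i)]

theorem gaussianReal_eq_withDensity_gaussianReal (a b : ℝ) {v : ℝ≥0} (hv : v ≠ 0) :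
    gaussianReal a v = (gaussianReal b v).withDensity
      fun x => ENNReal.ofReal (Real.exp (((x - b) ^ 2 - (x - a) ^ 2) / (2 * v))) := by
  rw [gaussianReal_of_var_ne_zero a hv, gaussianReal_of_var_ne_zero b hv,
    ← withDensity_mul _ (measurable_gaussianPDF b v) (by fun_prop)]
  congr 1
  ext x
  rw [Pi.mul_apply, gaussianPDF, gaussianPDF, ← ENNReal.ofReal_mul (gaussianPDFReal_nonneg _ _ _),
    gaussianPDFReal, gaussianPDFReal,
    mul_assoc _ (Real.exp _) (Real.exp _), ← Real.exp_add]
  congr 3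
  ring

theorem pi_gaussianReal_eq_withDensity (u w : ι → ℝ) {v : ℝ≥0} (hv : v ≠ 0) :
    (Measure.pi fun i => gaussianReal (u i) v) =
      (Measure.pi fun i => gaussianReal (w i) v).withDensity fun x =>
        ENNReal.ofReal (Real.exp (∑ i, ((x i - w i) ^ 2 - (x i - u i) ^ 2) / (2 * v))) := by
  have hfin (i : ι) : SigmaFinite ((gaussianReal (w i) v).withDensity
      fun x => ENNReal.ofReal (Real.exp (((x - w i) ^ 2 - (x - u i) ^ 2) / (2 * v)))) := by
    rw [← gaussianReal_eq_withDensity_gaussianReal (u i) (w i) hv]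
    infer_instance
  have h := pi_withDensity (fun i => gaussianReal (w i) v) (r := fun i x =>
    ENNReal.ofReal (Real.exp (((x - w i) ^ 2 - (x - u i) ^ 2) / (2 * v)))) fun i => by fun_prop
  simp only [← gaussianReal_eq_withDensity_gaussianReal _ _ hv] at h
  rw [h]
  congr 1
  ext x
  rw [Real.exp_sum, ENNReal.ofReal_prod_of_nonneg fun i _ => (Real.exp_pos _).le]

end Product

/-- If the privacy loss exceeds `ε` with probability at most `δ`, then `(ε, δ)`-indistinguishability
holds. -/
theorem withDensity_exp_apply_le {α : Type*} [MeasurableSpace α] (ν : Measure α) {L : α → ℝ}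
    (hL : Measurable L) {ε : ℝ} {δ : ℝ≥0∞}
    (hbad : ν.withDensity (fun x => ENNReal.ofReal (Real.exp (L x))) {x | ε < L x} ≤ δ)
    {S : Set α} (hS : MeasurableSet S) :
    ν.withDensity (fun x => ENNReal.ofReal (Real.exp (L x))) S ≤
      ENNReal.ofReal (Real.exp ε) * ν S + δ := by
  have hB : MeasurableSet {x | ε < L x} := measurableSet_lt measurable_const hL
  rw [← measure_sdiff_add_inter S hB]
  refine add_le_add ?_ ((measure_mono Set.inter_subset_right).trans hbad)
  rw [withDensity_apply _ (hS.diff hB)]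
  calc ∫⁻ x in S \ {x | ε < L x}, ENNReal.ofReal (Real.exp (L x)) ∂ν
      ≤ ∫⁻ _ in S \ {x | ε < L x}, ENNReal.ofReal (Real.exp ε) ∂ν :=
        setLIntegral_mono' (hS.diff hB) fun x hx =>
          ENNReal.ofReal_le_ofReal (Real.exp_le_exp.2 (not_lt.1 hx.2))
    _ = ENNReal.ofReal (Real.exp ε) * ν (S \ {x | ε < L x}) := by rw [setLIntegral_const]
    _ ≤ ENNReal.ofReal (Real.exp ε) * ν S := by
        gcongr
        exact Set.sdiff_subset

/-- The Gaussian privacy loss at distance `s` is a shifted Gaussian, so the event that it exceeds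
`ε` is a one-dimensional Gaussian tail. -/
theorem pi_gaussianReal_privacyLoss_tail {ι : Type*} [Fintype ι] (u w : ι → ℝ) {v : ℝ≥0}
    {s σ ε : ℝ} (hε : 0 < ε) (hs : 0 < s) (hσ : 0 < σ) (hv : (v : ℝ) = σ ^ 2)
    (hsum : ∑ i, (u i - w i) ^ 2 = s ^ 2) :
    ∃ m : ℝ, (Measure.pi fun i => gaussianReal (u i) v)
        {x | ε < ∑ i, ((x i - w i) ^ 2 - (x i - u i) ^ 2) / (2 * v)} =
      gaussianReal m 1 (Set.Ioi (m + (ε * σ / s - ε / (2 * (ε * σ / s))))) := by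
  set a : ι → ℝ := fun i => (u i - w i) / (σ * s) with ha
  have hmap := map_sum_const_mul_pi_gaussianReal a u fun _ => v
  have hvar : ∑ i, NNReal.mk (a i ^ 2) (sq_nonneg _) * v = 1 := by
    refine NNReal.eq ?_
    push_cast
    rw [← Finset.sum_mul, hv]
    simp only [ha, div_pow, ← Finset.sum_div, hsum]
    field_simp
  rw [hvar] at hmap
  refine ⟨∑ i, a i * u i, ?_⟩
  rw [← hmap, Measure.map_apply (by fun_prop) measurableSet_Ioi]
  congr 1
  ext x
  have hloss : ∑ i, ((x i - w i) ^ 2 - (x i - u i) ^ 2) / (2 * v) =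
      s / σ * (∑ i, a i * x i - ∑ i, a i * u i) + s ^ 2 / (2 * σ ^ 2) := by
    rw [← hsum, ← Finset.sum_sub_distrib, Finset.mul_sum, Finset.sum_div, ← Finset.sum_add_distrib]
    refine Finset.sum_congr rfl fun i _ => ?_
    rw [hv, ha]
    field_simp
    ring
  have hthreshold : ε = s / σ * (ε * σ / s - ε / (2 * (ε * σ / s))) + s ^ 2 / (2 * σ ^ 2) := by
    field_simp
    ring
  simp only [Set.mem_ofPred_eq, Set.mem_preimage, Set.mem_Ioi]
  rw [hloss]
  nth_rewrite 1 [hthreshold]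
  rw [add_lt_add_iff_right, mul_lt_mul_iff_right₀ (by positivity), lt_sub_iff_add_lt']

/-- The Gaussian mechanism `M(D) = f(D) + (Z₁, …, Z_k)`, with the `Z_i`
i.i.d. `N(0, σ²)` and `σ > √(2 ln(1.25/δ)) Δ₂f / ε` for `ε ∈ (0,1)`, is
`(ε, δ)`-differentially private. -/
theorem gaussian_mechanism_dp
    {D : Type*} {k : ℕ} (Neighbor : D → D → Prop)
    (f : D → (Fin k → ℝ)) (Δ₂f ε δ σ : ℝ)
    (hΔ : 0 < Δ₂f) (hε : 0 < ε) (hε1 : ε < 1) (hδ : 0 < δ)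
    (hsens : ∀ d d', Neighbor d d' →
      Real.sqrt (∑ i, (f d i - f d' i) ^ 2) ≤ Δ₂f)
    (hσ : σ > Real.sqrt (2 * Real.log (1.25 / δ)) * Δ₂f / ε)
    (M : D → Measure (Fin k → ℝ))
    (hMdef : ∀ d, M d = Measure.pi (fun i => gaussianReal (f d i) ((σ ^ 2).toNNReal))) :
    ∀ d d', Neighbor d d' → ∀ S : Set (Fin k → ℝ), MeasurableSet S →
      M d S ≤ ENNReal.ofReal (Real.exp ε) * M d' S + ENNReal.ofReal δ := by
  intro d d' hN S hS
  rw [hMdef d, hMdef d']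
  rcases le_or_gt 1 δ with hδ1 | hδ1
  · exact (prob_le_one.trans (ENNReal.one_le_ofReal.2 hδ1)).trans le_add_self
  set s := Real.sqrt (∑ i, (f d i - f d' i) ^ 2)
  have hsum : ∑ i, (f d i - f d' i) ^ 2 = s ^ 2 :=
    (Real.sq_sqrt (Finset.sum_nonneg fun i _ => sq_nonneg _)).symm
  have hs_nonneg : 0 ≤ s := Real.sqrt_nonneg _
  rcases hs_nonneg.eq_or_lt with hs0 | hs0
  · have hfd : f d = f d' := by
      rw [← hs0, zero_pow two_ne_zero,
        Finset.sum_eq_zero_iff_of_nonneg fun i _ => sq_nonneg _] at hsum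
      ext i
      exact sub_eq_zero.1 (pow_eq_zero_iff two_ne_zero |>.1 (hsum i (Finset.mem_univ i)))
    rw [hfd]
    exact (le_mul_of_one_le_left' (ENNReal.one_le_ofReal.2 (Real.one_le_exp hε.le))).trans
      le_self_add
  have hσ0 : 0 < σ := lt_of_le_of_lt (by positivity) hσ
  have hc : Real.sqrt (2 * Real.log (1.25 / δ)) < ε * σ / s := by
    rw [gt_iff_lt, div_lt_iff₀ hε, mul_comm σ] at hσ
    rw [lt_div_iff₀ hs0]
    exact (mul_le_mul_of_nonneg_left (hsens d d' hN) (Real.sqrt_nonneg _)).trans_lt hσ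
  have hv : (((σ ^ 2).toNNReal : ℝ≥0) : ℝ) = σ ^ 2 := Real.coe_toNNReal _ (sq_nonneg σ)
  have hv0 : (σ ^ 2).toNNReal ≠ 0 := (Real.toNNReal_pos.2 (by positivity)).ne'
  obtain ⟨m, hm⟩ := pi_gaussianReal_privacyLoss_tail (f d) (f d') hε hs0 hσ0 hv hsum
  have hbad := hm.trans_le (gaussianReal_Ioi_le_of_sqrt_log_lt m hε hε1 hδ hδ1 hc)
  rw [pi_gaussianReal_eq_withDensity (f d) (f d') hv0] at hbad ⊢
  exact withDensity_exp_apply_le _ (by fun_prop) hbad hS
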